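/- arXiv:2310.16674 — 3 statements merged into one kernel-verified Lean document; each statement's English description precedes it below -/
import Mathlib

section
/- For every integer k ≥ 1, every α ∈ ℝ, and every x ∈ ℝ, the monic Laguerre polynomials satisfy L_{k+1}^{(α−1)}(x) + (α − x) L_k^{(α)}(x) = −k x L_{k−1}^{(α+1)}(x). -/
open Finset Filter Topology

/-- Monic Laguerre polynomial `L_n^{(α)}(x)`. -/
noncomputable def lagP (n : ℕ) (α x : ℝ) : ℝ :=
  ∑ k ∈ Finset.range (n + 1),
    (-1 : ℝ) ^ (n - k) * ((n.factorial : ℝ) / (k.factorial : ℝ)) *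
      ((∏ j ∈ Finset.Icc (k + 1) n, (α + (j : ℝ))) / ((n - k).factorial : ℝ)) * x ^ k

/-- Pochhammer symbol `(a)_n = a (a+1) ⋯ (a+n−1)`. -/
noncomputable def poch (a : ℝ) (n : ℕ) : ℝ := ∏ j ∈ Finset.range n, (a + (j : ℝ))

/-- Monic Jacobi polynomial `P_n^{(α,β)}(x)`. -/
noncomputable def jacP (n : ℕ) (α β x : ℝ) : ℝ :=
  (2 ^ n * (n.factorial : ℝ) / poch ((n : ℝ) + α + β + 1) n) *
    ∑ s ∈ Finset.range (n + 1),
      ((∏ j ∈ Finset.Icc (s + 1) n, (α + (j : ℝ))) / ((n - s).factorial : ℝ)) *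
        ((∏ j ∈ Finset.Icc (n - s + 1) n, (β + (j : ℝ))) / (s.factorial : ℝ)) *
        ((x - 1) / 2) ^ s * ((x + 1) / 2) ^ (n - s)

/-- Monic Hermite polynomial, as a polynomial function on `ℂ`. -/
noncomputable def hermC (n : ℕ) (z : ℂ) : ℂ :=
  ∑ k ∈ Finset.range (n / 2 + 1),
    (-1 : ℂ) ^ k *
      ((n.factorial : ℂ) / ((k.factorial : ℂ) * ((n - 2 * k).factorial : ℂ) * 4 ^ k)) *
      z ^ (n - 2 * k)

/-- Type I `X_m`-Laguerre exceptional orthogonal polynomial `L̂^{(I,m)}_n(x;α)`. -/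
noncomputable def lagI (m n : ℕ) (α x : ℝ) : ℝ :=
  (-1 : ℝ) ^ m * (lagP m (α + 1) (-x) * lagP n α x
    - (n : ℝ) * lagP m α (-x) * lagP (n - 1) (α + 1) x)

/-- Type II `X_m`-Laguerre exceptional orthogonal polynomial `L̂^{(II,m)}_n(x;α)`. -/
noncomputable def lagII (m n : ℕ) (α x : ℝ) : ℝ :=
  (1 / (α + (n : ℝ) - (m : ℝ))) *
    ((n : ℝ) * x * lagP m (-α) x * lagP (n - 1) (α + 1) x
      - ((m : ℝ) - α) * lagP m (-α - 1) x * lagP n α x)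

/-- Type III `X_m`-Laguerre exceptional orthogonal polynomial `L̂^{(III,m)}_n(x;α)`. -/
noncomputable def lagIII (m n : ℕ) (α x : ℝ) : ℝ :=
  if n = 0 then 1 else
    (-1 : ℝ) ^ m * (lagP m (-α) (-x) * lagP (n - m) (α - 1) x
      - (m : ℝ) * x * lagP (m - 1) (-α + 1) (-x) * lagP (n - m - 1) α x)

/-- Type I `X_m`-Jacobi exceptional orthogonal polynomial `P̂^{(I,m)}_n(x;α,β)`. -/
noncomputable def jacI (m n : ℕ) (α β x : ℝ) : ℝ :=
  (1 / (β + (n : ℝ) - (m : ℝ))) *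
    (jacP m α (-β) x * ((n : ℝ) * (1 + x) * jacP (n - 1) (α + 1) (β + 1) x
        + β * jacP n α β x)
      - (m : ℝ) * (1 + x) * jacP (m - 1) (α + 1) (-β + 1) x * jacP n α β x)

/-- Type II `X_m`-Jacobi exceptional orthogonal polynomial `P̂^{(II,m)}_n(x;α,β)`. -/
noncomputable def jacII (m n : ℕ) (α β x : ℝ) : ℝ :=
  (1 / ((m : ℝ) - (n : ℝ) - α)) *
    (jacP m (-α) β x * ((n : ℝ) * (1 - x) * jacP (n - 1) (α + 1) (β + 1) x
        - α * jacP n α β x)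
      - (m : ℝ) * (1 - x) * jacP (m - 1) (-α + 1) (β + 1) x * jacP n α β x)

/-- Type III `X_m`-Jacobi exceptional orthogonal polynomial `P̂^{(III,m)}_n(x;α,β)`. -/
noncomputable def jacIII (m n : ℕ) (α β x : ℝ) : ℝ :=
  if n = 0 then 1 else
    (1 / (α + β + (n : ℝ) - 2 * (m : ℝ) - 1)) *
      ((α + β + (n : ℝ) - (m : ℝ) - 1) * jacP m (-α) (-β) x * jacP (n - m) (α - 1) (β - 1) x
        + (m : ℝ) * (1 - x ^ 2) * jacP (m - 1) (-α + 1) (-β + 1) x * jacP (n - m - 1) α β x)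

/-- Type III `X_m`-Hermite exceptional orthogonal polynomial `Ĥ^{(III,m)}_n(x)`
(a real polynomial, expressed via complex Hermite values). -/
noncomputable def hermIII (m n : ℕ) (x : ℝ) : ℂ :=
  if n = 0 then 1 else
    Complex.I ^ m * (hermC m (Complex.I * x) * hermC (n - m) (x : ℂ)
      + Complex.I * ((m : ℂ) / 2) * hermC (m - 1) (Complex.I * x) * hermC (n - m - 1) (x : ℂ))

theorem lag_prod_shift (a : ℝ) (p q : ℕ) :
    ∏ j ∈ Finset.Icc (p + 1) (q + 1), (a - 1 + (j : ℝ)) = ∏ j ∈ Finset.Icc p q, (a + (j : ℝ)) := by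
  rw [← Finset.map_add_right_Icc p q 1, Finset.prod_map]
  refine Finset.prod_congr rfl fun j _ => ?_
  simp only [addRightEmbedding_apply]
  push_cast
  ring

theorem lag_prod_left (a : ℝ) (p q : ℕ) (h : p ≤ q) :
    ∏ j ∈ Finset.Icc p q, (a + (j : ℝ)) = (a + p) * ∏ j ∈ Finset.Icc (p + 1) q, (a + (j : ℝ)) := by
  rw [← Finset.insert_Icc_add_one_left_eq_Icc h, Finset.prod_insert (by simp)]

theorem stmt14 (k : ℕ) (hk : 1 ≤ k) (α x : ℝ) :
    lagP (k + 1) (α - 1) x + (α - x) * lagP k α x = -(k : ℝ) * x * lagP (k - 1) (α + 1) x := by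
  obtain ⟨m, rfl⟩ : ∃ m, k = m + 1 := ⟨k - 1, by omega⟩
  have hA : lagP (m + 1 + 1) (α - 1) x = lagP (m + 1 + 1) (α - 1) x := rfl
  conv_rhs at hA =>
    unfold lagP
    rw [Finset.sum_range_succ, Finset.sum_range_succ']
  have hB : α * lagP (m + 1) α x = α * lagP (m + 1) α x := rfl
  conv_rhs at hB =>
    unfold lagP
    rw [Finset.sum_range_succ', mul_add, Finset.mul_sum]
  have hC : x * lagP (m + 1) α x = x * lagP (m + 1) α x := rfl
  conv_rhs at hC =>
    unfold lagP
    rw [Finset.sum_range_succ, mul_add, Finset.mul_sum]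
  have hD : ((m + 1 : ℕ) : ℝ) * x * lagP m (α + 1) x = ((m + 1 : ℕ) : ℝ) * x * lagP m (α + 1) x := rfl
  conv_rhs at hD =>
    unfold lagP
    rw [Finset.mul_sum]
  have key : lagP (m + 1 + 1) (α - 1) x + α * lagP (m + 1) α x - x * lagP (m + 1) α x
      + ((m + 1 : ℕ) : ℝ) * x * lagP m (α + 1) x = 0 := by
    rw [hA, hB, hC, hD]
    have h0 := lag_prod_shift α 0 (m + 1)
    rw [lag_prod_left α 0 (m + 1) (by omega)] at h0
    have hf : ∀ n : ℕ, (n.factorial : ℝ) ≠ 0 := fun n => by positivity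
    have hs : ∀ a b c d e f g : ℝ, a + d - e + g = 0 → b + f = 0 → c = 0 →
      a + b + c + (d + f) - e + g = 0 := by intros; linarith
    have hs2 : ∀ a b c d e f g h : ℝ, a + d - f + h = 0 → b + e = 0 → c = g →
      a + b + c + (d + e) - (f + g) + h = 0 := by intros; linarith
    apply hs2
    · rw [← Finset.sum_add_distrib, ← Finset.sum_sub_distrib, ← Finset.sum_add_distrib]
      refine Finset.sum_eq_zero fun i hi => ?_
      obtain ⟨d, rfl⟩ : ∃ d, m = i + d := ⟨m - i, by simp at hi; omega⟩
      have e1 : i + d + 1 + 1 - (i + 1) = d + 1 := by omega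
      have e2 : i + d + 1 - (i + 1) = d := by omega
      have e3 : i + d + 1 - i = d + 1 := by omega
      have e4 : i + d - i = d := by omega
      rw [e1, e2, e3, e4, lag_prod_shift α (i + 1) (i + d + 1),
        lag_prod_left α (i + 1) (i + d + 1) (by omega)]
      have h2 := lag_prod_shift (α + 1) (i + 1) (i + d)
      rw [add_sub_cancel_right] at h2
      rw [← h2]
      generalize ∏ j ∈ Finset.Icc (i + 1 + 1) (i + d + 1), (α + (j : ℝ)) = P
      rw [Nat.factorial_succ (i + d + 1), Nat.factorial_succ (i + d), Nat.factorial_succ d,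
        Nat.factorial_succ i]
      have := hf i
      have := hf d
      have : (i : ℝ) + 1 ≠ 0 := by positivity
      have : (d : ℝ) + 1 ≠ 0 := by positivity
      push_cast
      field_simp
      ring
    · simp only [Nat.sub_zero]
      rw [h0, Nat.factorial_succ (m + 1)]
      have := hf (m + 1)
      have : (m : ℝ) + 1 + 1 ≠ 0 := by positivity
      push_cast
      field_simp
      ring
    · have := hf (m + 1)
      have := hf (m + 1 + 1)
      simp [this, pow_succ]
      field_simp
  simp only [Nat.add_sub_cancel]
  linarith
end

section
/- Let n ∈ ℕ and α ∈ ℝ. For every x ∈ ℝ, lim_{β→∞} β^n P_n^{(α,−β)}(1 − 2x/β) = 2^n L_n^{(α)}(−x), the limit being taken along real β → +∞ (for all sufficiently large β the monic Jacobi polynomial P_n^{(α,−β)} is defined). -/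
open Finset Filter Topology

theorem aux_lim (c : ℝ) : Tendsto (fun β : ℝ => (-β + c) / β) atTop (nhds (-1)) := by
  have h : Tendsto (fun β : ℝ => -1 + c / β) atTop (nhds (-1 + 0)) :=
    tendsto_const_nhds.add (tendsto_const_nhds.div_atTop tendsto_id)
  rw [add_zero] at h
  refine h.congr' ?_
  filter_upwards [eventually_ne_atTop 0] with β hβ
  field_simp

theorem stmt16 (n : ℕ) (α x : ℝ) :
    Filter.Tendsto (fun β : ℝ => β ^ n * jacP n α (-β) (1 - 2 * x / β)) Filter.atTop
      (nhds (2 ^ n * lagP n α (-x))) := by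
  have hx : Tendsto (fun β : ℝ => 1 - x / β) atTop (nhds 1) := by
    have h : Tendsto (fun β : ℝ => 1 - x / β) atTop (nhds (1 - 0)) :=
      tendsto_const_nhds.sub (tendsto_const_nhds.div_atTop tendsto_id)
    rwa [sub_zero] at h
  have hp : Tendsto (fun β : ℝ => (∏ j ∈ Finset.range n,
      ((-β + ((n : ℝ) + α + 1 + (j : ℝ))) / β))⁻¹) atTop (nhds ((-1 : ℝ) ^ n)) := by
    have h := (tendsto_finset_prod (Finset.range n)
      (fun j _ => aux_lim ((n : ℝ) + α + 1 + (j : ℝ)))).inv₀ (by simp)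
    simpa [← inv_pow] using h
  have hs : ∀ s ∈ Finset.range (n + 1), Tendsto (fun β : ℝ =>
      ((∏ j ∈ Finset.Icc (s + 1) n, (α + (j : ℝ))) / ((n - s).factorial : ℝ)) *
        ((∏ j ∈ Finset.Icc (n - s + 1) n, ((-β + (j : ℝ)) / β)) / (s.factorial : ℝ)) *
        (-x) ^ s * (1 - x / β) ^ (n - s)) atTop
      (nhds (((∏ j ∈ Finset.Icc (s + 1) n, (α + (j : ℝ))) / ((n - s).factorial : ℝ)) *
        ((-1) ^ s / (s.factorial : ℝ)) * (-x) ^ s * 1 ^ (n - s))) := by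
    intro s hs
    have hsn : s ≤ n := by simpa [Nat.lt_succ_iff] using hs
    have h := tendsto_finset_prod (Finset.Icc (n - s + 1) n) (fun j _ => aux_lim (j : ℝ))
    have hc : n + 1 - (n - s + 1) = s := by omega
    rw [Finset.prod_const, Nat.card_Icc, hc] at h
    exact (((h.div_const _).const_mul _).mul_const _).mul (hx.pow _)
  have H := (hp.const_mul (2 ^ n * (n.factorial : ℝ))).mul (tendsto_finset_sum _ hs)
  have hlim : 2 ^ n * lagP n α (-x) = 2 ^ n * (n.factorial : ℝ) * (-1) ^ n *
      ∑ s ∈ Finset.range (n + 1),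
      ((∏ j ∈ Finset.Icc (s + 1) n, (α + (j : ℝ))) / ((n - s).factorial : ℝ)) *
        ((-1) ^ s / (s.factorial : ℝ)) * (-x) ^ s * 1 ^ (n - s) := by
    unfold lagP
    rw [Finset.mul_sum, Finset.mul_sum]
    refine Finset.sum_congr rfl fun s hs => ?_
    have hsn : s ≤ n := by simpa [Nat.lt_succ_iff] using hs
    have e : (-1 : ℝ) ^ (n - s) = (-1) ^ n * (-1) ^ s := by
      obtain ⟨k, rfl⟩ := Nat.exists_eq_add_of_le hsn
      rw [Nat.add_sub_cancel_left, pow_add, mul_right_comm, ← mul_pow]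
      simp
    rw [e, one_pow]
    ring
  rw [hlim]
  refine H.congr' ?_
  filter_upwards [eventually_ne_atTop 0] with β hβ
  unfold jacP poch
  have e1 : (∏ j ∈ Finset.range n, ((-β + ((n : ℝ) + α + 1 + (j : ℝ))) / β))⁻¹
      = β ^ n / ∏ j ∈ Finset.range n, ((n : ℝ) + α + -β + 1 + (j : ℝ)) := by
    rw [Finset.prod_div_distrib, inv_div, Finset.prod_const, Finset.card_range]
    congr 1
    exact Finset.prod_congr rfl fun j _ => by ring
  rw [e1]
  have e2 : (1 - 2 * x / β - 1) / 2 = -x / β := by ring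
  have e3 : (1 - 2 * x / β + 1) / 2 = 1 - x / β := by ring
  rw [e2, e3]
  have e4 : ∀ A B : ℝ, A = B → 2 ^ n * (n.factorial : ℝ) *
      (β ^ n / ∏ j ∈ Finset.range n, ((n : ℝ) + α + -β + 1 + (j : ℝ))) * A =
      β ^ n * (2 ^ n * (n.factorial : ℝ) /
        (∏ j ∈ Finset.range n, ((n : ℝ) + α + -β + 1 + (j : ℝ))) * B) := by
    rintro A B rfl
    ring
  apply e4
  refine Finset.sum_congr rfl fun s hs => ?_
  have hsn : s ≤ n := by simpa [Nat.lt_succ_iff] using hs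
  have hc : n + 1 - (n - s + 1) = s := by omega
  rw [Finset.prod_div_distrib, Finset.prod_const, Nat.card_Icc, hc, div_pow]
  ring
end

section
/- Let n ∈ ℕ. For every x ∈ ℝ, lim_{α→∞} (2α)^{−n/2} L_n^{(−α)}(−√(2α)·x − α) = i^n H_n(ix) = (−1)^n Σ_{k=0}^{⌊n/2⌋} n!/(k!(n−2k)! 4^k) x^{n−2k}, the limit being taken along real α → +∞; here H_n(ix) denotes the monic Hermite polynomial evaluated at ix in ℂ, and i^n H_n(ix) is a real polynomial in x. -/
open Finset Filter Topology

/-- Laguerre terms. -/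
noncomputable def lagT (a y : ℝ) (n k : ℕ) : ℝ :=
  (-1 : ℝ) ^ (n + k) * (n.choose k : ℝ) * (∏ j ∈ Finset.Icc (k + 1) n, (a + (j : ℝ))) * y ^ k

theorem lagP_eq (n N : ℕ) (h : n + 1 ≤ N) (a y : ℝ) :
    lagP n a y = ∑ k ∈ Finset.range N, lagT a y n k := by
  have h1 : ∑ k ∈ Finset.range (n + 1), lagT a y n k = ∑ k ∈ Finset.range N, lagT a y n k := by
    apply Finset.sum_subset
    · intro k hk
      simp only [Finset.mem_range] at *
      omega
    · intro k _ hk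
      simp only [Finset.mem_range, not_lt] at hk
      unfold lagT
      rw [Nat.choose_eq_zero_of_lt (by omega)]
      simp
  rw [← h1]
  unfold lagP
  apply Finset.sum_congr rfl
  intro k hk
  have hk' : k ≤ n := by
    simp only [Finset.mem_range] at hk
    omega
  unfold lagT
  obtain ⟨d, rfl⟩ := Nat.exists_eq_add_of_le hk'
  rw [Nat.cast_add_choose, Nat.add_sub_cancel_left]
  have : (-1 : ℝ) ^ (k + d + k) = (-1) ^ d := by
    rw [show k + d + k = 2 * k + d by ring, pow_add, pow_mul]
    simp
  rw [this]
  field_simp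

theorem lagQ_top (a : ℝ) (k n : ℕ) (h : k ≤ n) :
    (∏ j ∈ Finset.Icc (k + 1) (n + 1), (a + (j : ℝ))) =
      (∏ j ∈ Finset.Icc (k + 1) n, (a + (j : ℝ))) * (a + (n + 1 : ℝ)) := by
  rw [Finset.prod_Icc_succ_top (by omega)]
  push_cast
  rfl

theorem lagQ_bot (a : ℝ) (k n : ℕ) (h : k + 1 ≤ n) :
    (∏ j ∈ Finset.Icc (k + 1) n, (a + (j : ℝ))) =
      (a + (k + 1 : ℝ)) * ∏ j ∈ Finset.Icc (k + 1 + 1) n, (a + (j : ℝ)) := by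
  rw [← Finset.mul_prod_Ioc_eq_prod_Icc h, ← Finset.Icc_add_one_left_eq_Ioc]
  push_cast
  rfl

theorem lagT_zero (a y : ℝ) (m : ℕ) :
    lagT a y (m + 2) 0 = - (2 * m + 3 + a) * lagT a y (m + 1) 0
      - (m + 1) * (m + 1 + a) * lagT a y m 0 := by
  unfold lagT
  rw [lagQ_top a 0 (m + 1) (by omega), lagQ_top a 0 m (by omega)]
  push_cast
  simp only [Nat.choose_zero_right, pow_succ, Nat.add_zero, pow_zero]
  push_cast
  ring

theorem lagT_succ (a y : ℝ) (m k : ℕ) :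
    lagT a y (m + 2) (k + 1) = y * lagT a y (m + 1) k
      - (2 * m + 3 + a) * lagT a y (m + 1) (k + 1)
      - (m + 1) * (m + 1 + a) * lagT a y m (k + 1) := by
  unfold lagT
  have e1 : ((m + 2).choose (k + 1) : ℝ) = (m + 1).choose k + (m + 1).choose (k + 1) := by
    rw [show m + 2 = (m + 1) + 1 by ring, Nat.choose_succ_succ']
    push_cast
    rfl
  have e2 : ((m + 1).choose (k + 1) : ℝ) * (k + 1) = (m + 1) * m.choose k := by
    have := Nat.add_one_mul_choose_eq m k
    exact_mod_cast this.symm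
  have e3 : ((m + 1).choose (k + 1) : ℝ) = m.choose k + m.choose (k + 1) := by
    rw [Nat.choose_succ_succ']
    push_cast
    rfl
  have e4 : ((m + 2).choose (k + 1) : ℝ) * (k + 1) = (m + 2) * (m + 1).choose k := by
    have := Nat.add_one_mul_choose_eq (m + 1) k
    exact_mod_cast this.symm
  rcases lt_trichotomy m k with h | h | h
  · rw [Nat.choose_eq_zero_of_lt (show m < k + 1 by omega),
      Nat.choose_eq_zero_of_lt (show m + 1 < k + 1 by omega)]
    rcases Nat.lt_or_ge (m + 1) k with h' | h'
    · rw [Nat.choose_eq_zero_of_lt (show m + 1 < k by omega),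
        Nat.choose_eq_zero_of_lt (show m + 2 < k + 1 by omega)]
      simp
    · obtain rfl : k = m + 1 := by omega
      simp
      ring
  · subst h
    rw [lagQ_bot a m (m + 1) (by omega), lagQ_top a (m + 1) (m + 1) le_rfl]
    simp [show m + 2 = (m + 1) + 1 by ring, Nat.choose_succ_self_right]
    ring
  · rw [lagQ_bot a k (m + 1) (by omega), lagQ_top a (k + 1) (m + 1) (by omega),
      lagQ_top a (k + 1) m (by omega)]
    set R := ∏ j ∈ Finset.Icc (k + 1 + 1) m, (a + (j : ℝ))
    have key : ((m + 2).choose (k + 1) : ℝ) * (a + m + 2) =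
        (m + 1).choose k * (a + k + 1) + (2 * m + 3 + a) * (m + 1).choose (k + 1)
          - (m + 1) * m.choose (k + 1) := by
      linear_combination (a + m + 2 + (k + 1)) * e1 - e4 - (m + 1) * e3 + e2
    push_cast
    simp only [pow_succ, pow_add]
    linear_combination (-1) ^ m * (-1) ^ k * (-1) * R * y ^ k * y * (a + m + 1) * key

theorem lagP_rec (m : ℕ) (a y : ℝ) :
    lagP (m + 2) a y = (y - (2 * m + 3 + a)) * lagP (m + 1) a y
      - (m + 1) * (m + 1 + a) * lagP m a y := by
  have hy : y * lagP (m + 1) a y = ∑ k ∈ Finset.range (m + 2), y * lagT a y (m + 1) k := by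
    rw [lagP_eq (m + 1) (m + 2) (by omega), Finset.mul_sum]
  rw [sub_mul, hy, lagP_eq (m + 2) (m + 2 + 1) (by omega), lagP_eq (m + 1) (m + 2 + 1) (by omega),
    lagP_eq m (m + 2 + 1) (by omega), Finset.sum_range_succ', Finset.sum_range_succ' _ (m + 2),
    Finset.sum_range_succ' _ (m + 2), lagT_zero]
  simp only [lagT_succ, Finset.sum_sub_distrib, ← Finset.mul_sum]
  ring

/-- Hermite type sum. -/
noncomputable def herS (n : ℕ) (x : ℝ) : ℝ :=
  ∑ k ∈ Finset.range (n / 2 + 1),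
          (n.factorial : ℝ) / ((k.factorial : ℝ) * ((n - 2 * k).factorial : ℝ) * 4 ^ k)
            * x ^ (n - 2 * k)

/-- Hermite terms. -/
noncomputable def herT (x : ℝ) (n k : ℕ) : ℝ :=
  (n.choose (2 * k) : ℝ) * (((2 * k).factorial : ℝ) / ((k.factorial : ℝ) * 4 ^ k)) * x ^ (n - 2 * k)

theorem herS_eq (n N : ℕ) (h : n / 2 + 1 ≤ N) (x : ℝ) :
    herS n x = ∑ k ∈ Finset.range N, herT x n k := by
  have h1 : ∑ k ∈ Finset.range (n / 2 + 1), herT x n k = ∑ k ∈ Finset.range N, herT x n k := by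
    apply Finset.sum_subset
    · intro k hk
      simp only [Finset.mem_range] at *
      omega
    · intro k _ hk
      simp only [Finset.mem_range, not_lt] at hk
      unfold herT
      rw [Nat.choose_eq_zero_of_lt (by omega)]
      simp
  rw [← h1]
  unfold herS
  apply Finset.sum_congr rfl
  intro k hk
  have hk' : 2 * k ≤ n := by
    simp only [Finset.mem_range] at hk
    omega
  unfold herT
  obtain ⟨d, rfl⟩ := Nat.exists_eq_add_of_le hk'
  rw [Nat.cast_add_choose, Nat.add_sub_cancel_left]
  field_simp

theorem herT_succ (x : ℝ) (n k : ℕ) :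
    herT x (n + 2) (k + 1) = x * herT x (n + 1) (k + 1) + (n + 1) / 2 * herT x n k := by
  unfold herT
  have e1 : ((n + 2).choose (2 * (k + 1)) : ℝ)
      = (n + 1).choose (2 * k + 1) + (n + 1).choose (2 * (k + 1)) := by
    rw [show n + 2 = (n + 1) + 1 by ring, show 2 * (k + 1) = (2 * k + 1) + 1 by ring,
      Nat.choose_succ_succ']
    push_cast
    rfl
  have e2 : ((n + 1).choose (2 * k + 1) : ℝ) * (2 * k + 1) = (n + 1) * n.choose (2 * k) := by
    have := Nat.add_one_mul_choose_eq n (2 * k)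
    exact_mod_cast this.symm
  have e3 : ((2 * (k + 1)).factorial : ℝ) / (((k + 1).factorial : ℝ) * 4 ^ (k + 1))
      = ((2 * k).factorial : ℝ) / ((k.factorial : ℝ) * 4 ^ k) * ((2 * k + 1) / 2) := by
    rw [show 2 * (k + 1) = (2 * k + 1) + 1 by ring, Nat.factorial_succ, Nat.factorial_succ,
      Nat.factorial_succ]
    push_cast
    field_simp
    ring
  have e5 : x * (((n + 1).choose (2 * (k + 1)) : ℝ) * x ^ (n + 1 - 2 * (k + 1)))
      = ((n + 1).choose (2 * (k + 1)) : ℝ) * x ^ (n - 2 * k) := by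
    rcases Nat.lt_or_ge (n + 1) (2 * (k + 1)) with h | h
    · rw [Nat.choose_eq_zero_of_lt h]
      simp
    · rw [show n - 2 * k = (n + 1 - 2 * (k + 1)) + 1 by omega, pow_succ]
      ring
  rw [e1, e3, show n + 2 - 2 * (k + 1) = n - 2 * k by omega]
  set E := ((2 * k).factorial : ℝ) / ((k.factorial : ℝ) * 4 ^ k)
  linear_combination (-E * ((2 * k + 1) / 2)) * e5 + E / 2 * x ^ (n - 2 * k) * e2

theorem herS_rec (n : ℕ) (x : ℝ) :
    herS (n + 2) x = x * herS (n + 1) x + (n + 1) / 2 * herS n x := by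
  rw [herS_eq (n + 2) (n + 2 + 1) (by omega), herS_eq (n + 1) (n + 2 + 1) (by omega),
    herS_eq n (n + 2) (by omega), Finset.sum_range_succ', Finset.sum_range_succ' _ (n + 2)]
  simp only [herT_succ, Finset.sum_add_distrib, ← Finset.mul_sum]
  have : herT x (n + 2) 0 = x * herT x (n + 1) 0 := by
    simp [herT, pow_succ]
    ring
  rw [this]
  ring

theorem lag_lim (x : ℝ) (n : ℕ) :
    Filter.Tendsto (fun s : ℝ => s⁻¹ ^ n * lagP n (-(s ^ 2 / 2)) (-(s * x) - s ^ 2 / 2))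
      Filter.atTop (nhds ((-1 : ℝ) ^ n * herS n x)) := by
  have hinv : Filter.Tendsto (fun s : ℝ => s⁻¹) Filter.atTop (nhds 0) := tendsto_inv_atTop_zero
  induction n using Nat.twoStepInduction with
  | zero => simp [lagP, herS]
  | one =>
    have : Filter.Tendsto (fun s : ℝ => -x - s⁻¹) Filter.atTop (nhds (-x - 0)) :=
      tendsto_const_nhds.sub hinv
    have h2 : (-1 : ℝ) ^ 1 * herS 1 x = -x - 0 := by simp [herS]
    rw [h2]
    refine this.congr' ?_
    filter_upwards [Filter.eventually_gt_atTop 0] with s hs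
    simp [lagP, Finset.sum_range_succ]
    field_simp
    ring
  | more n ih0 ih1 =>
    have h2 : (-1 : ℝ) ^ (n + 2) * herS (n + 2) x =
        (-x - (2 * n + 3) * 0) * ((-1 : ℝ) ^ (n + 1) * herS (n + 1) x)
        - (n + 1) * ((n + 1) * 0 ^ 2 - 1 / 2) * ((-1 : ℝ) ^ n * herS n x) := by
      rw [herS_rec]
      ring
    rw [h2]
    have : Filter.Tendsto (fun s : ℝ =>
        (-x - (2 * n + 3) * s⁻¹) * (s⁻¹ ^ (n + 1) *
          lagP (n + 1) (-(s ^ 2 / 2)) (-(s * x) - s ^ 2 / 2))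
        - (n + 1) * ((n + 1) * s⁻¹ ^ 2 - 1 / 2) *
          (s⁻¹ ^ n * lagP n (-(s ^ 2 / 2)) (-(s * x) - s ^ 2 / 2))) Filter.atTop
        (nhds ((-x - (2 * n + 3) * 0) * ((-1 : ℝ) ^ (n + 1) * herS (n + 1) x)
        - (n + 1) * ((n + 1) * 0 ^ 2 - 1 / 2) * ((-1 : ℝ) ^ n * herS n x))) :=
      ((tendsto_const_nhds.sub (hinv.const_mul _)).mul ih1).sub
        (((((hinv.pow 2).const_mul _).sub tendsto_const_nhds).const_mul _).mul ih0)
    refine this.congr' ?_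
    filter_upwards [Filter.eventually_gt_atTop 0] with s hs
    rw [lagP_rec]
    generalize lagP (n + 1) _ _ = A
    generalize lagP n _ _ = B
    simp only [inv_pow]
    field_simp
    ring

theorem stmt18 (n : ℕ) (x : ℝ) :
    Filter.Tendsto
        (fun α : ℝ => (2 * α) ^ (-(n : ℝ) / 2) * lagP n (-α) (-(Real.sqrt (2 * α) * x) - α))
        Filter.atTop
        (nhds ((-1 : ℝ) ^ n * ∑ k ∈ Finset.range (n / 2 + 1),
          (n.factorial : ℝ) / ((k.factorial : ℝ) * ((n - 2 * k).factorial : ℝ) * 4 ^ k)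
            * x ^ (n - 2 * k))) ∧
      (((-1 : ℝ) ^ n * ∑ k ∈ Finset.range (n / 2 + 1),
          (n.factorial : ℝ) / ((k.factorial : ℝ) * ((n - 2 * k).factorial : ℝ) * 4 ^ k)
            * x ^ (n - 2 * k) : ℝ) : ℂ)
        = Complex.I ^ n * hermC n (Complex.I * x) := by
  constructor
  · have hs : Filter.Tendsto (fun α : ℝ => Real.sqrt (2 * α)) Filter.atTop Filter.atTop :=
      Real.tendsto_sqrt_atTop.comp (Filter.tendsto_id.const_mul_atTop (by norm_num))
    refine ((lag_lim x n).comp hs).congr' ?_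
    filter_upwards [Filter.eventually_gt_atTop 0] with α hα
    have h0 : (0 : ℝ) ≤ 2 * α := by positivity
    have h1 : (2 * α) ^ (-(n : ℝ) / 2) = (Real.sqrt (2 * α))⁻¹ ^ n := by
      rw [Real.sqrt_eq_rpow, ← Real.rpow_neg h0, ← Real.rpow_natCast, ← Real.rpow_mul h0]
      congr 1
      ring
    simp only [Function.comp, Real.sq_sqrt h0, h1]
    rw [show 2 * α / 2 = α by ring]
  · unfold hermC
    push_cast
    rw [Finset.mul_sum, Finset.mul_sum]
    apply Finset.sum_congr rfl
    intro k hk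
    have hk' : 2 * k ≤ n := by
      simp only [Finset.mem_range] at hk
      omega
    obtain ⟨d, rfl⟩ := Nat.exists_eq_add_of_le hk'
    rw [Nat.add_sub_cancel_left, mul_pow]
    have : Complex.I ^ (2 * k + d) * ((-1) ^ k * Complex.I ^ d) = (-1) ^ (2 * k + d) := by
      have h1 : Complex.I ^ d * Complex.I ^ d = (-1) ^ d := by rw [← mul_pow, Complex.I_mul_I]
      rw [pow_add, pow_add, pow_mul, pow_mul, Complex.I_sq, ← h1]
      have h2 : ((-1 : ℂ) ^ k) * (-1) ^ k = ((-1) ^ 2) ^ k := by rw [← mul_pow]; norm_num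
      linear_combination Complex.I ^ d * Complex.I ^ d * h2
    rw [← this]
    ring
end
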